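/- Let F be a field of characteristic p, let q = p^k be a power of p, and let E ≥ 1, 1 ≤ D ≤ q − 2, and 1 ≤ d ≤ q be integers. Let T : F[y] → F[y] be an F-linear operator such that: (1) deg T(f) ≤ deg f − E for every nonzero f ∈ F[y]; (2) there exist c ∈ F and polynomials q_D, q_{D+1}, …, q_d ∈ F[y] with deg q_i ≤ i − D, such that with companion polynomial P = (X + c·y)^d + Σ_{i=D}^{d} q_i(y)·X^{d−i} (a polynomial of the shape (X+cy)^d plus terms of total degree ≤ d − D), the sequence {T(y^n)}_n satisfies the corresponding linear recurrence for all n ≥ d. Then for every f ∈ F[y] with deg f ≥ 1, N_T(f) ≤ ((q−D)(q−1)/(E·(q−D−1)))·(deg f)^{log(q−D)/log q}. -/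

import Mathlib

open Polynomial

/-- The nilpotence index of `f` with respect to `T`: the largest `k` with `T^k f ≠ 0`. -/
noncomputable def nilpIndex {R : Type} [CommRing R]
    (T : Module.End R (Polynomial R)) (f : Polynomial R) : ℕ :=
  sSup {k : ℕ | (T ^ k) f ≠ 0}

/-- Read the base-`q` digits of `n` in base `r`. -/
def digitContent (q r n : ℕ) : ℕ := Nat.ofDigits r (Nat.digits q n)

section digitContent

variable {q r : ℕ}

lemma digitContent_zero : digitContent q r 0 = 0 := by simp [digitContent]

lemma digitContent_eq (hq : 2 ≤ q) (n : ℕ) :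
    digitContent q r n = n % q + r * digitContent q r (n / q) := by
  rcases Nat.eq_zero_or_pos n with rfl | hn
  · simp [digitContent]
  · rw [digitContent, Nat.digits_def' (by omega) hn, Nat.ofDigits_cons, digitContent]

lemma digitContent_of_lt (hq : 2 ≤ q) {n : ℕ} (hn : n < q) : digitContent q r n = n := by
  rw [digitContent_eq hq, Nat.div_eq_of_lt hn, digitContent_zero, Nat.mod_eq_of_lt hn]
  simp

lemma digitContent_succ_le (hq : 2 ≤ q) (hr : r ≤ q) (n : ℕ) :
    digitContent q r (n + 1) ≤ digitContent q r n + 1 := by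
  induction n using Nat.strong_induction_on with
  | _ n ih =>
    rcases Nat.lt_or_ge n q with hn | hn
    · rcases Nat.lt_or_ge (n + 1) q with h | h
      · rw [digitContent_of_lt hq h, digitContent_of_lt hq hn]
      · obtain rfl : q = n + 1 := by omega
        rw [digitContent_eq hq (n + 1), digitContent_of_lt hq hn, Nat.mod_self,
          Nat.div_self (by omega), digitContent_of_lt hq (by omega)]
        omega
    · have hlt : n / q < n := Nat.div_lt_self (by omega) (by omega)
      rw [digitContent_eq hq (n + 1), digitContent_eq hq n]
      have hmod := Nat.mod_lt n (show 0 < q by omega)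
      have hdiv := Nat.div_add_mod n q
      rcases Nat.lt_or_ge (n % q + 1) q with h | h
      · have h1 : (n + 1) / q = n / q := by
          have := mul_comm (n / q) q
          rw [Nat.div_eq_iff (by omega)]
          omega
        have h2 := Nat.div_add_mod (n + 1) q
        rw [h1] at h2 ⊢
        omega
      · have h1 : n + 1 = q * (n / q + 1) := by rw [mul_add]; omega
        have h2 := ih _ hlt
        rw [h1, Nat.mul_mod_right, Nat.mul_div_cancel_left _ (by omega)]
        have h3 := Nat.mul_le_mul_left r h2
        rw [mul_add] at h3
        omega

lemma digitContent_add_le (hq : 2 ≤ q) (hr : r ≤ q) (a b : ℕ) :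
    digitContent q r (a + b) ≤ digitContent q r a + digitContent q r b := by
  induction a using Nat.strong_induction_on generalizing b with
  | _ a ih =>
    rcases Nat.eq_zero_or_pos a with rfl | ha
    · simp
    have hlt : a / q < a := Nat.div_lt_self ha (by omega)
    have h1 := ih _ hlt (b / q)
    rw [digitContent_eq hq (a + b), digitContent_eq hq a, digitContent_eq hq b,
      Nat.add_div (by omega)]
    have hmod := Nat.mod_lt a (show 0 < q by omega)
    have hmod' := Nat.mod_lt b (show 0 < q by omega)
    have h3 := Nat.mul_le_mul_left r h1
    rw [mul_add] at h3
    split_ifs with h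
    · have h2 := Nat.mul_le_mul_left r (digitContent_succ_le hq hr (a / q + b / q))
      rw [mul_add] at h2
      have h4 : (a + b) % q + q = a % q + b % q := Nat.add_mod_add_of_le_add_mod h
      omega
    · have h4 : (a + b) % q = a % q + b % q := Nat.add_mod_of_add_mod_lt (by omega)
      rw [add_zero]
      omega

lemma digitContent_le_self (hq : 2 ≤ q) (hr : r ≤ q) (n : ℕ) : digitContent q r n ≤ n := by
  induction n with
  | zero => simp [digitContent_zero]
  | succ n ih => exact (digitContent_succ_le hq hr n).trans (by omega)

lemma digitContent_mul_pow_le (hq : 2 ≤ q) (hr : r ≤ q) (a i : ℕ) :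
    digitContent q r (a * q ^ i) ≤ a * r ^ i := by
  induction i with
  | zero => simpa using digitContent_le_self hq hr a
  | succ i ih =>
    have h : a * q ^ (i + 1) = q * (a * q ^ i) := by ring
    rw [digitContent_eq hq, h, Nat.mul_mod_right, Nat.mul_div_cancel_left _ (by omega)]
    calc 0 + r * digitContent q r (a * q ^ i) ≤ r * (a * r ^ i) := by
          rw [zero_add]; exact Nat.mul_le_mul_left r ih
      _ = a * r ^ (i + 1) := by ring

lemma digitContent_pow_add (hq : 2 ≤ q) (j m : ℕ) (h : q ^ j + m < q ^ (j + 1)) :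
    digitContent q r (q ^ j + m) = r ^ j + digitContent q r m := by
  induction j generalizing m with
  | zero =>
    simp only [pow_zero, zero_add, pow_one] at h ⊢
    rw [digitContent_of_lt hq h, digitContent_of_lt hq (by omega)]
  | succ j ih =>
    have h0 : q ^ (j + 1) + m = m + q * q ^ j := by ring
    have hdiv : (q ^ (j + 1) + m) / q = q ^ j + m / q := by
      rw [h0, Nat.add_mul_div_left _ _ (by omega), add_comm]
    have hmod : (q ^ (j + 1) + m) % q = m % q := by
      rw [h0, Nat.add_mul_mod_self_left]
    have hlt : q ^ j + m / q < q ^ (j + 1) := by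
      rw [← hdiv]
      exact Nat.div_lt_of_lt_mul (by rwa [← pow_succ'])
    rw [digitContent_eq hq, hdiv, hmod, ih _ hlt, digitContent_eq hq m]
    ring

lemma digitContent_mul_add_le (hq : 2 ≤ q) (hr : 1 ≤ r) (j n : ℕ) (h : n < q ^ j) :
    digitContent q r n * (r - 1) + (q - 1) ≤ (q - 1) * r ^ j := by
  induction j generalizing n with
  | zero =>
    obtain rfl : n = 0 := by simpa using h
    simp [digitContent_zero]
  | succ j ih =>
    have h1 := ih (n / q) (Nat.div_lt_of_lt_mul (by rwa [← pow_succ']))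
    rw [digitContent_eq hq]
    have hmod : n % q ≤ q - 1 := by
      have := Nat.mod_lt n (show 0 < q by omega)
      omega
    obtain ⟨s, rfl⟩ : ∃ s, r = s + 1 := ⟨r - 1, by omega⟩
    obtain ⟨t, rfl⟩ : ∃ t, q = t + 1 := ⟨q - 1, by omega⟩
    simp only [Nat.add_sub_cancel] at h1 hmod ⊢
    have h2 := Nat.mul_le_mul_left (s + 1) h1
    have h3 := Nat.mul_le_mul_right s hmod
    rw [pow_succ]
    nlinarith

end digitContent

section contentBound

variable {F : Type*} [Field F]

/-- Polynomials all of whose exponents `s` satisfy `w s + E ≤ B`. -/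
def contentSubmodule (F : Type*) [Field F] (w : ℕ → ℕ) (E B : ℕ) : Submodule F F[X] where
  carrier := {f | ∀ s, f.coeff s ≠ 0 → w s + E ≤ B}
  zero_mem' := by intro s hs; simp at hs
  add_mem' := by
    intro f g hf hg s hs
    by_cases h : f.coeff s = 0
    · exact hg s (by simpa [h] using hs)
    · exact hf s h
  smul_mem' := by
    intro a f hf s hs
    exact hf s (by rintro h; simp [h] at hs)

lemma contentSubmodule_mono {w : ℕ → ℕ} {E B B' : ℕ} (h : B ≤ B') :
    contentSubmodule F w E B ≤ contentSubmodule F w E B' :=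
  fun _ hf s hs => (hf s hs).trans h

lemma X_pow_mul_mem_contentSubmodule {w : ℕ → ℕ} (hw : ∀ a b, w (a + b) ≤ w a + w b)
    {E B : ℕ} {f : F[X]} (hf : f ∈ contentSubmodule F w E B) (b : ℕ) :
    X ^ b * f ∈ contentSubmodule F w E (B + w b) := by
  intro s hs
  rw [coeff_X_pow_mul'] at hs
  split_ifs at hs with h
  · have h1 := hf _ hs
    have h2 := hw (s - b) b
    rw [Nat.sub_add_cancel h] at h2
    omega
  · exact absurd rfl hs

/-- If `T` lowers the weight of every monomial by `E`, it lowers that of every polynomial. -/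
lemma map_mem_contentSubmodule {w : ℕ → ℕ} {E : ℕ} {T : Module.End F F[X]}
    (hT : ∀ n, T (X ^ n) ∈ contentSubmodule F w E (w n)) {B : ℕ} {f : F[X]}
    (hf : f ∈ contentSubmodule F w 0 B) : T f ∈ contentSubmodule F w E B := by
  rw [f.as_sum_support_C_mul_X_pow, map_sum]
  refine Submodule.sum_mem _ fun i hi => ?_
  rw [← smul_eq_C_mul, map_smul]
  exact Submodule.smul_mem _ _
    (contentSubmodule_mono (hf i (mem_support_iff.mp hi)) (hT i))

lemma pow_mem_contentSubmodule {w : ℕ → ℕ} {E : ℕ} {T : Module.End F F[X]}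
    (hT : ∀ n, T (X ^ n) ∈ contentSubmodule F w E (w n)) {B : ℕ} {f : F[X]}
    (hf : f ∈ contentSubmodule F w 0 B) (k : ℕ) :
    (T ^ k) f ∈ contentSubmodule F w (k * E) B := by
  induction k with
  | zero => simpa using hf
  | succ k ih =>
    rw [pow_succ', Module.End.mul_apply]
    by_cases h0 : (T ^ k) f = 0
    · rw [h0, map_zero]; exact Submodule.zero_mem _
    have hB : k * E ≤ B := by
      have := ih _ (leadingCoeff_ne_zero.mpr h0)
      omega
    have h : (T ^ k) f ∈ contentSubmodule F w 0 (B - k * E) := by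
      intro s hs
      have := ih s hs
      omega
    intro s hs
    have := map_mem_contentSubmodule hT h s hs
    rw [add_mul]
    omega

lemma mul_le_of_pow_ne_zero {w : ℕ → ℕ} {E : ℕ} {T : Module.End F F[X]}
    (hT : ∀ n, T (X ^ n) ∈ contentSubmodule F w E (w n)) {B : ℕ} {f : F[X]}
    (hf : f ∈ contentSubmodule F w 0 B) {k : ℕ} (hk : (T ^ k) f ≠ 0) : k * E ≤ B := by
  have := pow_mem_contentSubmodule hT hf k _ (leadingCoeff_ne_zero.mpr hk)
  omega

end contentBound

section recurrence

variable {F : Type*} [Field F]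

/-- The span of the monomials `y ^ (b * e) * X ^ (a * e)` with `a + b ≤ N`. -/
noncomputable def totalDegreeSpan (F : Type*) [Field F] (N e : ℕ) : Submodule F F[X][X] :=
  Submodule.span F {g | ∃ a b, a + b ≤ N ∧ g = C (X ^ (b * e)) * X ^ (a * e)}

lemma monomial_mem_totalDegreeSpan {N a b : ℕ} (h : a + b ≤ N) :
    (C (X ^ b) * X ^ a : F[X][X]) ∈ totalDegreeSpan F N 1 :=
  Submodule.subset_span ⟨a, b, h, by simp⟩

lemma C_mul_X_pow_mem_totalDegreeSpan {N a b : ℕ} (h : a + b ≤ N) {f : F[X]}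
    (hf : f.degree ≤ b) : (C f * X ^ a : F[X][X]) ∈ totalDegreeSpan F N 1 := by
  rw [f.as_sum_support_C_mul_X_pow, map_sum, Finset.sum_mul]
  refine Submodule.sum_mem _ fun i hi => ?_
  have hib : i ≤ b := by
    exact_mod_cast (le_degree_of_mem_supp i hi).trans hf
  rw [← smul_eq_C_mul (f.coeff i), ← smul_C, smul_mul_assoc]
  exact Submodule.smul_mem _ _ (monomial_mem_totalDegreeSpan (by omega))

lemma mul_mem_totalDegreeSpan {M N : ℕ} {f g : F[X][X]} (hf : f ∈ totalDegreeSpan F M 1)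
    (hg : g ∈ totalDegreeSpan F N 1) : f * g ∈ totalDegreeSpan F (M + N) 1 := by
  have h := Submodule.mul_mem_mul hf hg
  rw [totalDegreeSpan, totalDegreeSpan, Submodule.span_mul_span] at h
  refine Submodule.span_mono ?_ h
  rintro _ ⟨_, ⟨a, b, hab, rfl⟩, _, ⟨a', b', hab', rfl⟩, rfl⟩
  refine ⟨a + a', b + b', by omega, ?_⟩
  simp only [mul_one, pow_add, C_mul]
  ring

lemma pow_mem_totalDegreeSpan {M : ℕ} {f : F[X][X]} (hf : f ∈ totalDegreeSpan F M 1) (n : ℕ) :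
    f ^ n ∈ totalDegreeSpan F (n * M) 1 := by
  induction n with
  | zero => simpa using monomial_mem_totalDegreeSpan (F := F) (N := 0 * M) (a := 0) (b := 0)
  | succ n ih =>
    rw [pow_succ, add_mul, one_mul]
    exact mul_mem_totalDegreeSpan ih hf

lemma frobenius_mem_totalDegreeSpan (p : ℕ) [Fact p.Prime] [CharP F p] {N : ℕ} {f : F[X][X]}
    (hf : f ∈ totalDegreeSpan F N 1) (i : ℕ) :
    f ^ p ^ i ∈ totalDegreeSpan F N (p ^ i) := by
  induction hf using Submodule.span_induction with
  | mem g hg =>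
    obtain ⟨a, b, hab, rfl⟩ := hg
    refine Submodule.subset_span ⟨a, b, hab, ?_⟩
    rw [mul_pow, ← C_pow, ← pow_mul, ← pow_mul, mul_one, mul_one]
  | zero =>
    rw [zero_pow (pow_ne_zero _ (Fact.out : p.Prime).ne_zero)]
    exact Submodule.zero_mem _
  | add g h _ _ hg hh =>
    rw [add_pow_char_pow]
    exact Submodule.add_mem _ hg hh
  | smul a g _ hg =>
    rw [_root_.smul_pow]
    exact Submodule.smul_mem _ _ hg

/-- The `F[y]`-linear functional on `F[y][X]` sending `X ^ n` to `s n`. -/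
noncomputable def sequenceEval (s : ℕ → F[X]) : F[X][X] →ₗ[F[X]] F[X] :=
  (Polynomial.basisMonomials F[X]).constr F[X] s

lemma sequenceEval_X_pow (s : ℕ → F[X]) (n : ℕ) : sequenceEval s (X ^ n) = s n := by
  have h := (Polynomial.basisMonomials F[X]).constr_basis F[X] s n
  rw [coe_basisMonomials] at h
  rwa [X_pow_eq_monomial]

lemma sequenceEval_C_mul (s : ℕ → F[X]) (a : F[X]) (f : F[X][X]) :
    sequenceEval s (C a * f) = a * sequenceEval s f := by
  rw [← smul_eq_C_mul, map_smul, smul_eq_mul]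

lemma sequenceEval_mul_eq_zero {s : ℕ → F[X]} {P : F[X][X]}
    (h : ∀ n, sequenceEval s (X ^ n * P) = 0) (G : F[X][X]) : sequenceEval s (G * P) = 0 := by
  induction G using Polynomial.induction_on' with
  | add f g hf hg => rw [add_mul, map_add, hf, hg, add_zero]
  | monomial n a => rw [← C_mul_X_pow_eq_monomial, mul_assoc, sequenceEval_C_mul, h, mul_zero]

lemma X_add_C_mul_X_pow_eq (c : F) (d : ℕ) : (X + C (C c * X) : F[X][X]) ^ d = X ^ d +
    ∑ i ∈ Finset.Icc 1 d, C (C ((d.choose i : F) * c ^ i) * X ^ i) * X ^ (d - i) := by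
  have h : Finset.range (d + 1) = insert 0 (Finset.Icc 1 d) := by
    ext i; simp only [Finset.mem_insert, Finset.mem_Icc, Finset.mem_range]; omega
  rw [add_comm, add_pow, h, Finset.sum_insert (by simp), pow_zero, one_mul, Nat.sub_zero,
    Nat.choose_zero_right, Nat.cast_one, mul_one]
  refine congrArg (X ^ d + ·) (Finset.sum_congr rfl fun i _ => ?_)
  have hC : (C (C ((d.choose i : F) * c ^ i) * X ^ i) : F[X][X]) =
      (d.choose i : F[X][X]) * C (C c * X) ^ i := by
    rw [C_mul (R := F), mul_assoc, C_pow, ← mul_pow, C_mul, C_pow, map_natCast, map_natCast]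
  rw [hC, mul_comm, mul_assoc]

lemma sequenceEval_companion_eq_zero {s : ℕ → F[X]} {c : F} {D d : ℕ} (hD : 1 ≤ D)
    {Q : ℕ → F[X]}
    (hrec : ∀ n, d ≤ n → s n = -∑ i ∈ Finset.Icc 1 d,
      (C ((d.choose i : F) * c ^ i) * X ^ i + if D ≤ i then Q i else 0) * s (n - i)) (n : ℕ) :
    sequenceEval s (X ^ n * ((X + C (C c * X)) ^ d +
      ∑ i ∈ Finset.Icc D d, C (Q i) * X ^ (d - i))) = 0 := by
  have hP : X ^ n * ((X + C (C c * X)) ^ d + ∑ i ∈ Finset.Icc D d, C (Q i) * X ^ (d - i)) =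
      X ^ (n + d) + ∑ i ∈ Finset.Icc 1 d,
        C (C ((d.choose i : F) * c ^ i) * X ^ i + if D ≤ i then Q i else 0) *
          X ^ (n + d - i) := by
    have h1 : ∑ i ∈ Finset.Icc D d, (C (Q i) * X ^ (d - i) : F[X][X]) =
        ∑ i ∈ Finset.Icc 1 d, C (if D ≤ i then Q i else 0) * X ^ (d - i) := by
      have h : Finset.Icc D d = (Finset.Icc 1 d).filter (D ≤ ·) := by
        ext i; simp only [Finset.mem_Icc, Finset.mem_filter]; omega
      rw [h, Finset.sum_filter]
      refine Finset.sum_congr rfl fun i _ => ?_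
      split_ifs <;> simp
    rw [h1, X_add_C_mul_X_pow_eq, add_assoc, ← Finset.sum_add_distrib, mul_add, ← pow_add,
      Finset.mul_sum]
    refine congrArg (X ^ (n + d) + ·) (Finset.sum_congr rfl fun i hi => ?_)
    rw [Finset.mem_Icc] at hi
    rw [Nat.add_sub_assoc hi.2, pow_add, C_add, ← add_mul, mul_left_comm]
  rw [hP, map_add, map_sum, sequenceEval_X_pow, hrec _ (Nat.le_add_left d n)]
  simp only [sequenceEval_C_mul, sequenceEval_X_pow]
  exact neg_add_cancel _

/-- Passing to a multiple of the companion polynomial whose leading form is `X ^ q + (c y) ^ q`. -/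
lemma exists_sequenceEval_pow_eq_zero (p : ℕ) [Fact p.Prime] [CharP F p] {k D d : ℕ}
    (hD : 1 ≤ D) (hd : d ≤ p ^ k) {s : ℕ → F[X]} {c : F} {Q : ℕ → F[X]}
    (hQ : ∀ i, D ≤ i → i ≤ d → (Q i).degree ≤ ((i - D : ℕ) : WithBot ℕ))
    (hrec : ∀ n, d ≤ n → s n = -∑ i ∈ Finset.Icc 1 d,
      (C ((d.choose i : F) * c ^ i) * X ^ i + if D ≤ i then Q i else 0) * s (n - i)) :
    ∃ R ∈ totalDegreeSpan F (p ^ k - D) 1, ∀ G,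
      sequenceEval s (G * (X ^ p ^ k + C (C c * X) ^ p ^ k + R)) = 0 := by
  refine ⟨(X + C (C c * X)) ^ (p ^ k - d) * ∑ i ∈ Finset.Icc D d, C (Q i) * X ^ (d - i), ?_,
    fun G => ?_⟩
  · rw [Finset.mul_sum]
    refine Submodule.sum_mem _ fun i hi => ?_
    rw [Finset.mem_Icc] at hi
    have hlin : (X + C (C c * X) : F[X][X]) ∈ totalDegreeSpan F 1 1 := by
      refine Submodule.add_mem _ ?_ ?_
      · simpa using monomial_mem_totalDegreeSpan (F := F) (N := 1) (a := 1) (b := 0) le_rfl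
      · simpa using C_mul_X_pow_mem_totalDegreeSpan (F := F) (N := 1) (a := 0) (b := 1) le_rfl
          (f := C c * X) (degree_C_mul_X_le c)
    have h := mul_mem_totalDegreeSpan (pow_mem_totalDegreeSpan hlin (p ^ k - d))
      (C_mul_X_pow_mem_totalDegreeSpan (N := d - D) (a := d - i) (by omega) (hQ i hi.1 hi.2))
    have he : (p ^ k - d) * 1 + (d - D) = p ^ k - D := by omega
    rwa [he] at h
  · rw [← add_pow_char_pow, ← Nat.sub_add_cancel hd, pow_add, Nat.add_sub_cancel, ← mul_add,
      ← mul_assoc]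
    exact sequenceEval_mul_eq_zero (sequenceEval_companion_eq_zero hD hrec) _

lemma map_X_pow_mem_contentSubmodule (p : ℕ) [Fact p.Prime] [CharP F p] {q r k E : ℕ}
    (hqk : q = p ^ k) (hq : 2 ≤ q) (hr : r < q) {T : Module.End F F[X]}
    (hdeg : ∀ f : F[X], f ≠ 0 → (T f).degree + (E : WithBot ℕ) ≤ f.degree)
    {c : F} {R : F[X][X]} (hR : R ∈ totalDegreeSpan F r 1)
    (hrec : ∀ G, sequenceEval (fun n => T (X ^ n))
      (G * (X ^ q + C (C c * X) ^ q + R)) = 0) (n : ℕ) :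
    T (X ^ n) ∈ contentSubmodule F (digitContent q r) E (digitContent q r n) := by
  have hsub := digitContent_add_le hq hr.le
  induction n using Nat.strong_induction_on with
  | _ n ih =>
    rcases Nat.lt_or_ge n q with hn | hn
    · intro s hs
      have h1 := hdeg (X ^ n) (pow_ne_zero _ X_ne_zero)
      rw [degree_X_pow] at h1
      have h2 : ((s + E : ℕ) : WithBot ℕ) ≤ n := by
        push_cast
        exact (add_le_add_left (le_degree_of_ne_zero hs) _).trans h1
      have h3 : s + E ≤ n := by exact_mod_cast h2
      rw [digitContent_of_lt hq hn, digitContent_of_lt hq (by omega)]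
      exact h3
    · obtain ⟨i, hi⟩ : ∃ i, Nat.log q n = i + 1 :=
        Nat.exists_eq_succ_of_ne_zero (Nat.log_pos (by omega) hn).ne'
      have hle : q ^ (i + 1) ≤ n := hi ▸ Nat.pow_log_le_self q (by omega)
      have hlt : n < q ^ (i + 1 + 1) := hi ▸ Nat.lt_pow_succ_log_self (by omega) n
      obtain ⟨m, rfl⟩ : ∃ m, n = q ^ (i + 1) + m := ⟨n - q ^ (i + 1), by omega⟩
      have hpos' : 0 < q ^ (i + 1) := pow_pos (by omega) _
      have hpos : 0 < q ^ i := pow_pos (by omega) i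
      have hwn := digitContent_pow_add (r := r) hq _ _ hlt
      have hqi : q ^ i = p ^ (k * i) := by rw [hqk, pow_mul]
      have hP : (X ^ q + C (C c * X) ^ q + R : F[X][X]) ^ q ^ i =
          X ^ q ^ (i + 1) + C (C (c ^ q ^ (i + 1)) * X ^ q ^ (i + 1)) + R ^ q ^ i := by
        rw [hqi, add_pow_char_pow, add_pow_char_pow, ← hqi, ← pow_mul, ← pow_mul,
          ← pow_succ',
          ← C_pow, mul_pow, ← C_pow]
      have hRi : R ^ q ^ i ∈ totalDegreeSpan F r (q ^ i) := by
        rw [hqi]; exact frobenius_mem_totalDegreeSpan p hR _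
      have hzero := hrec (X ^ m * (X ^ q + C (C c * X) ^ q + R) ^ (q ^ i - 1))
      rw [mul_assoc, ← pow_succ, Nat.sub_add_cancel hpos, hP, mul_add, mul_add, map_add, map_add,
        ← pow_add, sequenceEval_X_pow, mul_comm (X ^ m), sequenceEval_C_mul,
        sequenceEval_X_pow, add_assoc, add_comm m] at hzero
      rw [eq_neg_of_add_eq_zero_left hzero]
      refine Submodule.neg_mem _ (Submodule.add_mem _ ?_ ?_)
      · rw [mul_assoc, ← smul_eq_C_mul]
        refine Submodule.smul_mem _ _ (contentSubmodule_mono ?_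
          (X_pow_mul_mem_contentSubmodule hsub (ih m (by omega)) _))
        have := digitContent_mul_pow_le hq hr.le 1 (i + 1)
        rw [one_mul, one_mul] at this
        rw [hwn]
        omega
      · clear hzero hP
        generalize R ^ q ^ i = g at hRi ⊢
        induction hRi using Submodule.span_induction with
        | mem g hg =>
          obtain ⟨a, b, hab, rfl⟩ := hg
          rw [mul_left_comm, ← pow_add, sequenceEval_C_mul, sequenceEval_X_pow]
          have haq : a * q ^ i < q ^ (i + 1) := by
            rw [pow_succ']
            exact Nat.mul_lt_mul_of_pos_right (by omega) hpos
          refine contentSubmodule_mono ?_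
            (X_pow_mul_mem_contentSubmodule hsub (ih (m + a * q ^ i) (by omega)) _)
          have h1 := hsub m (a * q ^ i)
          have h2 := digitContent_mul_pow_le hq hr.le a i
          have h3 := digitContent_mul_pow_le hq hr.le b i
          have h4 := Nat.mul_le_mul_right (r ^ i) hab
          rw [add_mul, ← pow_succ'] at h4
          rw [hwn]
          omega
        | zero => rw [mul_zero, map_zero]; exact Submodule.zero_mem _
        | add g h _ _ hg hh => rw [mul_add, map_add]; exact Submodule.add_mem _ hg hh
        | smul a g _ hg =>
          rw [mul_smul_comm, LinearMap.map_smul_of_tower]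
          exact Submodule.smul_mem _ _ hg

end recurrence

/-- The digit content of `n` is bounded by a power of `n`. -/
lemma digitContent_le_rpow {q r s N : ℕ} (hq : 2 ≤ q) (hr : 2 ≤ r) (hN : 1 ≤ N) (hs : s ≤ N) :
    (digitContent q r s : ℝ) ≤ (r : ℝ) * ((q - 1 : ℕ) : ℝ) / ((r - 1 : ℕ) : ℝ) *
      (N : ℝ) ^ (Real.log r / Real.log q) := by
  have hlt : s < q ^ (Nat.log q N + 1) := hs.trans_lt (Nat.lt_pow_succ_log_self (by omega) N)
  have h1 := digitContent_mul_add_le (r := r) hq (by omega) _ s hlt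
  have h2 : (digitContent q r s : ℝ) * ((r - 1 : ℕ) : ℝ) ≤
      ((q - 1 : ℕ) : ℝ) * (r : ℝ) ^ (Nat.log q N + 1) := by
    exact_mod_cast (Nat.le_add_right _ _).trans h1
  have hq1 : (1 : ℝ) < q := by exact_mod_cast hq
  have hr0 : (0 : ℝ) < r := by exact_mod_cast (show 0 < r by omega)
  have hr1 : (1 : ℝ) ≤ r := by exact_mod_cast (show 1 ≤ r by omega)
  have hr' : (0 : ℝ) < ((r - 1 : ℕ) : ℝ) := by exact_mod_cast (show 0 < r - 1 by omega)
  have hbase : (q : ℝ) ^ (Real.log r / Real.log q) = r := Real.rpow_logb (by linarith) hq1.ne' hr0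
  have h3 : (r : ℝ) ^ Nat.log q N ≤ (N : ℝ) ^ (Real.log r / Real.log q) := by
    have h4 : ((q : ℝ) ^ Nat.log q N) ^ (Real.log r / Real.log q) = (r : ℝ) ^ Nat.log q N := by
      rw [← Real.rpow_natCast, ← Real.rpow_mul (by linarith), mul_comm,
        Real.rpow_mul (by linarith), hbase, Real.rpow_natCast]
    rw [← h4]
    refine Real.rpow_le_rpow (by positivity) ?_
      (div_nonneg (Real.log_nonneg hr1) (Real.log_nonneg hq1.le))
    exact_mod_cast Nat.pow_log_le_self q (by omega)
  rw [div_mul_eq_mul_div, le_div_iff₀ hr']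
  refine h2.trans ?_
  rw [pow_succ, mul_comm (r : ℝ), mul_assoc, mul_comm _ (r : ℝ)]
  gcongr

/-- **Refined toy Nilpotence Growth Theorem.** -/
theorem stmt4 {F : Type} [Field F] (p : ℕ) (hp : p.Prime) [CharP F p]
    (k q : ℕ) (hq : q = p ^ k)
    (E D d : ℕ) (hE : 1 ≤ E) (hD1 : 1 ≤ D) (hDq : D ≤ q - 2) (hd1 : 1 ≤ d) (hdq : d ≤ q)
    (T : Module.End F (Polynomial F))
    -- (1) `deg T(f) ≤ deg f − E` for nonzero `f`:
    (hdeglow : ∀ f : Polynomial F, f ≠ 0 → (T f).degree + (E : WithBot ℕ) ≤ f.degree)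
    (c : F) (Q : ℕ → Polynomial F)
    (hQdeg : ∀ i, D ≤ i → i ≤ d → (Q i).degree ≤ ((i - D : ℕ) : WithBot ℕ))
    -- recurrence with companion polynomial `(X + c·y)^d + Σ_{i=D}^d Q_i(y)·X^{d−i}`:
    (hrec : ∀ n, d ≤ n →
      T ((X : Polynomial F) ^ n) =
        -∑ i ∈ Finset.Icc 1 d,
          (C ((d.choose i : F) * c ^ i) * X ^ i + if D ≤ i then Q i else 0) *
            T (X ^ (n - i))) :
    ∀ f : Polynomial F, (1 : WithBot ℕ) ≤ f.degree →
      (nilpIndex T f : ℝ) ≤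
        (((q - D : ℕ) : ℝ) * ((q - 1 : ℕ) : ℝ)) / ((E : ℝ) * ((q - D - 1 : ℕ) : ℝ)) *
          (f.natDegree : ℝ) ^ (Real.log ((q - D : ℕ) : ℝ) / Real.log (q : ℝ)) := by
  intro f hf
  subst hq
  have : Fact p.Prime := ⟨hp⟩
  obtain ⟨R, hR, hPR⟩ := exists_sequenceEval_pow_eq_zero p (s := fun n => T (X ^ n)) hD1 hdq
    hQdeg hrec
  have hT := map_X_pow_mem_contentSubmodule p rfl (by omega) (by omega) hdeglow hR hPR
  set w := digitContent (p ^ k) (p ^ k - D)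
  have hN : 1 ≤ f.natDegree := by
    rw [degree_eq_natDegree (by rintro rfl; simp at hf)] at hf
    exact_mod_cast hf
  obtain ⟨t, ht, hmax⟩ := (Finset.range (f.natDegree + 1)).exists_max_image w ⟨0, by simp⟩
  have hfw : f ∈ contentSubmodule F w 0 (w t) := fun s hs =>
    hmax s (Finset.mem_range_succ_iff.mpr (le_natDegree_of_ne_zero hs))
  have hmem : nilpIndex T f * E ≤ w t := by
    have hk : ∀ n ∈ {n : ℕ | (T ^ n) f ≠ 0}, n * E ≤ w t := fun n hn =>
      mul_le_of_pow_ne_zero hT hfw hn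
    refine hk _ (Nat.sSup_mem ⟨0, ?_⟩ ⟨w t, fun n hn => ?_⟩)
    · rintro h
      rw [pow_zero, Module.End.one_apply] at h
      simp [h] at hf
    · exact (Nat.le_mul_of_pos_right n hE).trans (hk n hn)
  have hbound := digitContent_le_rpow (q := p ^ k) (r := p ^ k - D) (by omega) (by omega) hN
    (Finset.mem_range_succ_iff.mp ht)
  have hE0 : (0 : ℝ) < E := by exact_mod_cast hE
  have hmem' : (nilpIndex T f : ℝ) * E ≤ w t := by exact_mod_cast hmem
  rw [mul_comm (E : ℝ), ← div_div, div_mul_eq_mul_div, le_div_iff₀ hE0]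
  exact hmem'.trans hbound
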